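/- There exists an absolute constant c > 0 such that the following holds for every n large enough. Let V be a finite vertex set with |V| = n. There exists a single symmetric Boolean function g : V × V → {0,1} (a 2-distinguisher) such that for every ε > 0 and every family D of Boolean functions on V with VC dimension ρ ≥ 1: if for all probability distributions p₁, p₂ on V one has IPM_D(p₁,p₂) ≥ ε·|L_{p₁}(g) − L_{p₂}(g)|, then log₂ n ≤ c·(ρ/ε²)·log²(ρ/ε²). -/

import Mathlib

open scoped BigOperators

namespace GraphDisc

/-- A `k`-distinguisher is symmetric: invariant under all permutations of arguments. -/
def IsSymmetric {V : Type*} {k : ℕ} (g : (Fin k → V) → Bool) : Prop :=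
  ∀ (σ : Equiv.Perm (Fin k)) (w : Fin k → V), g (w ∘ σ) = g w

/-- A `k`-distinguishing class: a family of symmetric Boolean `k`-ary functions. -/
def IsDistinguishingClass {V : Type*} {k : ℕ} (G : Set ((Fin k → V) → Bool)) : Prop :=
  ∀ g ∈ G, IsSymmetric g

/-- `p` is a probability distribution on `V` (as a mass function). -/
def IsDist {V : Type*} (p : V → ℝ) : Prop := (∀ v, 0 ≤ p v) ∧ HasSum p 1

/-- `L_P(g)`: expected value of `g` on a `k`-tuple of i.i.d. samples from `p`. -/
noncomputable def LP {V : Type*} {k : ℕ} (p : V → ℝ) (g : (Fin k → V) → Bool) : ℝ :=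
  ∑' w : Fin k → V, (∏ i, p (w i)) * (if g w then 1 else 0)

/-- `L_S(g)`: empirical frequency of `g` on all `k`-tuples from the sample `S`. -/
noncomputable def LS {V : Type*} {k m : ℕ} (S : Fin m → V) (g : (Fin k → V) → Bool) : ℝ :=
  (∑ t : Fin k → Fin m, if g (S ∘ t) then (1 : ℝ) else 0) / (m : ℝ) ^ k

/-- Probability of an event `E` under an i.i.d. sample of size `m` from `p`. -/
noncomputable def Prob {V : Type*} (p : V → ℝ) {m : ℕ} (E : Set (Fin m → V)) : ℝ :=
  ∑' S : Fin m → V, E.indicator (fun S => ∏ i, p (S i)) S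

/-- Probability of an event `E` under two independent i.i.d. samples of size `m`. -/
noncomputable def Prob2 {V : Type*} (p₁ p₂ : V → ℝ) {m : ℕ}
    (E : Set ((Fin m → V) × (Fin m → V))) : ℝ :=
  ∑' S : (Fin m → V) × (Fin m → V),
    E.indicator (fun S => (∏ i, p₁ (S.1 i)) * ∏ i, p₂ (S.2 i)) S

/-- IPM distance induced by a class of `k`-ary distinguishers. -/
noncomputable def IPM {V : Type*} {k : ℕ} (G : Set ((Fin k → V) → Bool))
    (p₁ p₂ : V → ℝ) : ℝ :=
  ⨆ g ∈ G, |LP p₁ g - LP p₂ g|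

/-- `L_P(d)` for a unary Boolean function `d`. -/
noncomputable def LP1 {V : Type*} (p : V → ℝ) (d : V → Bool) : ℝ :=
  ∑' v : V, p v * (if d v then 1 else 0)

/-- IPM distance for a family of unary Boolean functions. -/
noncomputable def IPM1 {V : Type*} (D : Set (V → Bool)) (p₁ p₂ : V → ℝ) : ℝ :=
  ⨆ d ∈ D, |LP1 p₁ d - LP1 p₂ d|

/-- `L_P(g)` for a binary (curried) Boolean function `g`. -/
noncomputable def LP2 {V : Type*} (p : V → ℝ) (g : V → V → Bool) : ℝ :=
  ∑' w : V × V, (p w.1 * p w.2) * (if g w.1 w.2 then 1 else 0)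

/-- `D` shatters the finite set `T`: every Boolean pattern on `T` is realized in `D`. -/
def Shatters {X : Type*} (D : Set (X → Bool)) (T : Finset X) : Prop :=
  ∀ f : X → Bool, ∃ d ∈ D, ∀ x ∈ T, d x = f x

/-- The VC dimension of a family of Boolean functions. -/
noncomputable def vcDim {X : Type*} (D : Set (X → Bool)) : ℕ∞ :=
  ⨆ T ∈ {T : Finset X | Shatters D T}, (T.card : ℕ∞)

/-- Fixing the first argument of a `(k+1)`-ary function to `v`. -/
def proj {V : Type*} {k : ℕ} (v : V) (g : (Fin (k + 1) → V) → Bool) :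
    (Fin k → V) → Bool := fun u => g (Fin.cons v u)

/-- The graph VC dimension, defined inductively: for `k = 1` it is the usual VC
dimension; for `k > 1` it is the supremum over `v` of the graph VC dimension of the
projected class `G_v`. -/
noncomputable def gvcDim {V : Type*} : (k : ℕ) → Set ((Fin k → V) → Bool) → ℕ∞
  | 0, G => vcDim G
  | 1, G => vcDim G
  | (k + 2), G => ⨆ v : V, gvcDim (k + 1) (proj v '' G)

open Classical in
/-- Mixture `q·δ_v + (1−q)·p`. -/
noncomputable def mix {V : Type*} (q : ℝ) (v : V) (p : V → ℝ) : V → ℝ :=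
  fun u => q * (if u = v then 1 else 0) + (1 - q) * p u

/-- The class of majority-vote threshold functions over `m`-tuples from `D`. -/
noncomputable def thresholdClass {V : Type*} (D : Set (V → Bool)) (m : ℕ) :
    Set (V → Bool) :=
  {h | ∃ d : Fin m → (V → Bool), (∀ i, d i ∈ D) ∧
        h = fun v => decide ((0 : ℝ) ≤ ∑ i, (2 * (if d i v then (1 : ℝ) else 0) - 1))}


/-!
Let `k ≈ log₂ n` and let `g` be the adjacency of the bipartite graph that joins each point `s` of
the cube `{0,1}ᵏ` to the `k` literals `(i, sᵢ)`, placed inside `V`. Half of the weight on `s` and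
half spread over the literals `(i, sᵢ)` gives edge density `1/2`; spreading the second half over the
opposite literals gives density `0`. So `D` has to separate these two distributions by `ε / 2`, for
every `s`.

For a fixed `d ∈ D` and random `s`, the difference of the two expectations of `d` is `1 / (2k)`
times a Rademacher sum with coefficients in `[-1, 1]`. By Sauer–Shelah `D` has at most
`(2k + 1) ^ ρ` traces on the `2k` literals, so Massart's exponential-moment bound provides an `s`
for which no `d ∈ D` separates by more than `(2 ρ log (2k + 1) + ε² k / 2) / (2kε)`. Hence
`k ≤ 4 (ρ / ε²) log (2k + 1)`, which inverts to `k = O((ρ / ε²) log (ρ / ε²))`.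
-/

section Traces

open Finset

variable {X α : Type*} {D : Set (X → Bool)} {ρ : ℕ}

lemma Shatters.card_le_vcDim {T : Finset X} (hT : Shatters D T) : (#T : ℕ∞) ≤ vcDim D :=
  le_iSup₂_of_le T hT le_rfl

variable [Fintype α]

/-- The trace of `d` along `f`: the set of those `a` with `d (f a) = true`. -/
def trace (d : X → Bool) (f : α → X) : Finset α := {a | d (f a)}

@[simp]
lemma mem_trace {d : X → Bool} {f : α → X} {a : α} : a ∈ trace d f ↔ d (f a) = true := by
  simp [trace]

open Classical in
/-- The set family induced by `D` along `f`, to which `Finset.vcDim` and the Sauer–Shelah lemma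
apply. -/
noncomputable def traces (D : Set (X → Bool)) (f : α → X) : Finset (Finset α) :=
  {T | ∃ d ∈ D, trace d f = T}

@[simp]
lemma mem_traces {f : α → X} {T : Finset α} : T ∈ traces D f ↔ ∃ d ∈ D, trace d f = T := by
  simp [traces]

lemma shatters_map_of_shatters_traces [DecidableEq α] {f : α ↪ X} {S : Finset α}
    (hS : (traces D f).Shatters S) : Shatters D (S.map f) := by
  intro b
  obtain ⟨T, hT, hST⟩ := hS (filter_subset (fun a ↦ b (f a) = true) S)
  obtain ⟨d, hd, rfl⟩ := mem_traces.1 hT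
  refine ⟨d, hd, fun x hx ↦ ?_⟩
  obtain ⟨a, ha, rfl⟩ := mem_map.1 hx
  simpa [ha] using Finset.ext_iff.1 hST a

lemma vcDim_traces_le [DecidableEq α] (f : α ↪ X) (hD : vcDim D ≤ ρ) :
    (traces D f).vcDim ≤ ρ := by
  refine Finset.sup_le fun S hS ↦ ?_
  have hcard := (shatters_map_of_shatters_traces (mem_shatterer.1 hS)).card_le_vcDim.trans hD
  rw [card_map] at hcard
  exact_mod_cast hcard

lemma sum_Iic_choose_le_pow (m r : ℕ) : ∑ i ∈ Iic r, m.choose i ≤ (m + 1) ^ r := by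
  rw [add_pow, ← Nat.range_succ_eq_Iic]
  refine sum_le_sum fun i hi ↦ ?_
  have hchoose : 0 < r.choose i := Nat.choose_pos (Nat.lt_succ_iff.1 (mem_range.1 hi))
  simpa using (Nat.choose_le_pow m i).trans (Nat.le_mul_of_pos_right _ hchoose)

lemma card_traces_le (f : α ↪ X) (hD : vcDim D ≤ ρ) :
    #(traces D f) ≤ (Fintype.card α + 1) ^ ρ := by
  classical
  calc #(traces D f) ≤ ∑ i ∈ Iic (traces D f).vcDim, (Fintype.card α).choose i :=
        (card_le_card_shatterer _).trans card_shatterer_le_sum_vcDim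
    _ ≤ (Fintype.card α + 1) ^ (traces D f).vcDim := sum_Iic_choose_le_pow _ _
    _ ≤ (Fintype.card α + 1) ^ ρ := Nat.pow_le_pow_right (Nat.succ_pos _) (vcDim_traces_le f hD)

lemma log_two_mul_card_traces_le [Nonempty α] (f : α ↪ X) (hρ : 1 ≤ ρ) (hD : vcDim D ≤ ρ) :
    Real.log (2 * #(traces D f)) ≤ 2 * ρ * Real.log (Fintype.card α + 1) := by
  have hα : 1 ≤ Fintype.card α := Fintype.card_pos
  have htwo : 2 ≤ (Fintype.card α + 1) ^ ρ := by
    calc 2 ≤ Fintype.card α + 1 := by lia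
      _ ≤ (Fintype.card α + 1) ^ ρ := Nat.le_self_pow (by lia) _
  have hcard : 2 * #(traces D f) ≤ (Fintype.card α + 1) ^ (2 * ρ) := by
    rw [two_mul ρ, pow_add]
    exact Nat.mul_le_mul htwo (card_traces_le f hD)
  rcases (#(traces D f)).eq_zero_or_pos with hzero | hpos
  · rw [hzero, Nat.cast_zero, mul_zero, Real.log_zero]
    have : 0 ≤ Real.log (Fintype.card α + 1) := Real.log_nonneg (by simp)
    positivity
  calc Real.log (2 * #(traces D f)) ≤ Real.log ((Fintype.card α + 1 : ℝ) ^ (2 * ρ)) :=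
        Real.log_le_log (by positivity) (by exact_mod_cast hcard)
    _ = 2 * ρ * Real.log (Fintype.card α + 1) := by rw [Real.log_pow]; push_cast; ring

end Traces

section SignedSum

open Finset Real

variable {ι κ : Type*} [Fintype ι]

/-- The Rademacher sum `∑ᵢ ±aᵢ`, where `true` encodes the sign `+`. -/
def signedSum (s : ι → Bool) (a : ι → ℝ) : ℝ := ∑ i, if s i then a i else -a i

lemma sum_exp_mul_signedSum [DecidableEq ι] (t : ℝ) (a : ι → ℝ) :
    ∑ s, exp (t * signedSum s a) = ∏ i, 2 * cosh (t * a i) := by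
  have hcosh (i : ι) : 2 * cosh (t * a i) = ∑ b : Bool, exp (t * if b then a i else -a i) := by
    simp [cosh_eq, field]
  simp only [hcosh, Fintype.prod_sum, signedSum, mul_sum, exp_sum]

lemma sum_exp_mul_signedSum_le [DecidableEq ι] (t : ℝ) (a : ι → ℝ) :
    ∑ s, exp (t * signedSum s a) ≤ 2 ^ Fintype.card ι * exp (t ^ 2 / 2 * ∑ i, a i ^ 2) :=
  calc ∑ s, exp (t * signedSum s a) = ∏ i, 2 * cosh (t * a i) := sum_exp_mul_signedSum t a
    _ ≤ ∏ i, 2 * exp ((t * a i) ^ 2 / 2) :=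
        prod_le_prod (fun _ _ ↦ by positivity) fun i _ ↦ by
          gcongr
          exact cosh_le_exp_half_sq _
    _ = 2 ^ Fintype.card ι * exp (t ^ 2 / 2 * ∑ i, a i ^ 2) := by
        rw [prod_mul_distrib, prod_const, card_univ, ← exp_sum, mul_sum]
        simp only [mul_pow, div_mul_eq_mul_div]

lemma sum_exp_abs_mul_signedSum_le [DecidableEq ι] (t : ℝ) (a : ι → ℝ) :
    ∑ s, exp |t * signedSum s a| ≤
      2 ^ Fintype.card ι * (2 * exp (t ^ 2 / 2 * ∑ i, a i ^ 2)) :=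
  calc ∑ s, exp |t * signedSum s a|
      ≤ ∑ s, exp (t * signedSum s a) + ∑ s, exp (-t * signedSum s a) := by
        simp only [← sum_add_distrib, neg_mul]
        exact sum_le_sum fun _ _ ↦ exp_abs_le _
    _ ≤ 2 ^ Fintype.card ι * exp (t ^ 2 / 2 * ∑ i, a i ^ 2) +
          2 ^ Fintype.card ι * exp ((-t) ^ 2 / 2 * ∑ i, a i ^ 2) :=
        add_le_add (sum_exp_mul_signedSum_le t a) (sum_exp_mul_signedSum_le (-t) a)
    _ = 2 ^ Fintype.card ι * (2 * exp (t ^ 2 / 2 * ∑ i, a i ^ 2)) := by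
        rw [neg_sq]
        ring

lemma exists_forall_mul_abs_signedSum_le (F : Finset κ) (a : κ → ι → ℝ) {B : ℝ}
    (ha : ∀ j ∈ F, ∑ i, a j i ^ 2 ≤ B) (t : ℝ) :
    ∃ s, ∀ j ∈ F, t * |signedSum s (a j)| ≤ log (2 * #F) + t ^ 2 / 2 * B := by
  classical
  have hsum : ∑ s, ∑ j ∈ F, exp |t * signedSum s (a j)| ≤
      ∑ _s : ι → Bool, 2 * #F * exp (t ^ 2 / 2 * B) :=
    calc ∑ s, ∑ j ∈ F, exp |t * signedSum s (a j)|
        = ∑ j ∈ F, ∑ s, exp |t * signedSum s (a j)| := sum_comm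
      _ ≤ ∑ _j ∈ F, 2 ^ Fintype.card ι * (2 * exp (t ^ 2 / 2 * B)) :=
          sum_le_sum fun j hj ↦ (sum_exp_abs_mul_signedSum_le t (a j)).trans <| by
            gcongr
            exact ha j hj
      _ = ∑ _s : ι → Bool, 2 * #F * exp (t ^ 2 / 2 * B) := by
          simp
          ring
  obtain ⟨s, -, hs⟩ := exists_le_of_sum_le univ_nonempty hsum
  refine ⟨s, fun j hj ↦ ?_⟩
  have hF : (#F : ℝ) ≠ 0 := Nat.cast_ne_zero.2 (card_ne_zero_of_mem hj)
  have hexp : exp |t * signedSum s (a j)| ≤ 2 * #F * exp (t ^ 2 / 2 * B) :=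
    (single_le_sum (f := fun j ↦ exp |t * signedSum s (a j)|) (fun _ _ ↦ exp_nonneg _) hj).trans hs
  calc t * |signedSum s (a j)| ≤ |t * signedSum s (a j)| := by
        rw [abs_mul]
        gcongr
        exact le_abs_self t
    _ ≤ log (2 * #F * exp (t ^ 2 / 2 * B)) := by
        simpa only [log_exp] using log_le_log (exp_pos _) hexp
    _ = log (2 * #F) + t ^ 2 / 2 * B := by
        rw [log_mul (mul_ne_zero two_ne_zero hF) (exp_ne_zero _), log_exp]

end SignedSum

section EmpiricalDist

variable {V J : Type*} [Fintype J]

open Classical in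
/-- The empirical distribution of the sample `x`, as a mass function. -/
noncomputable def empiricalDist (x : J → V) : V → ℝ :=
  fun v ↦ (∑ j, if v = x j then 1 else 0) / Fintype.card J

lemma hasSum_empiricalDist_mul (x : J → V) (f : V → ℝ) :
    HasSum (fun v ↦ empiricalDist x v * f v) ((∑ j, f (x j)) / Fintype.card J) := by
  classical
  have hsum : HasSum (fun v ↦ (∑ j, if v = x j then f (x j) else 0) / Fintype.card J)
      ((∑ j, f (x j)) / Fintype.card J) :=
    (hasSum_sum fun j _ ↦ hasSum_ite_eq (x j) (f (x j))).div_const _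
  refine hsum.congr_fun fun v ↦ ?_
  rw [empiricalDist, div_mul_eq_mul_div, Finset.sum_mul]
  congr 1
  exact Finset.sum_congr rfl fun j _ ↦ by split_ifs with h <;> simp [h]

lemma isDist_empiricalDist [Nonempty J] (x : J → V) : IsDist (empiricalDist x) := by
  refine ⟨fun v ↦ ?_, by simpa using hasSum_empiricalDist_mul x fun _ ↦ 1⟩
  unfold empiricalDist
  positivity

lemma LP1_empiricalDist (x : J → V) (d : V → Bool) :
    LP1 (empiricalDist x) d = (∑ j, if d (x j) then 1 else 0) / Fintype.card J :=
  (hasSum_empiricalDist_mul x _).tsum_eq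

lemma empiricalDist_mul_empiricalDist (x : J → V) (w : V × V) :
    empiricalDist x w.1 * empiricalDist x w.2 = empiricalDist (Prod.map x x) w := by
  obtain ⟨u, v⟩ := w
  simp only [empiricalDist, div_mul_div_comm, Finset.sum_mul_sum, ite_zero_mul_ite_zero, mul_one,
    Fintype.sum_prod_type, Fintype.card_prod, Nat.cast_mul, Prod.map_apply]
  congr! 5
  exact Prod.mk_inj.symm

lemma LP2_empiricalDist (x : J → V) (g : V → V → Bool) :
    LP2 (empiricalDist x) g =
      (∑ i, ∑ j, if g (x i) (x j) then 1 else 0) / (Fintype.card J : ℝ) ^ 2 := by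
  simp only [LP2, empiricalDist_mul_empiricalDist]
  rw [(hasSum_empiricalDist_mul _ fun w : V × V ↦ if g w.1 w.2 then (1 : ℝ) else 0).tsum_eq,
    Fintype.sum_prod_type, Fintype.card_prod, Nat.cast_mul, sq]
  rfl

end EmpiricalDist

section CubeGraph

open Finset Real

variable {V ι : Type*}

open Classical in
/-- The adjacency indicator of a graph, viewed as a 2-distinguisher. -/
noncomputable def adjIndicator (G : SimpleGraph V) : V → V → Bool := fun x y ↦ decide (G.Adj x y)

lemma adjIndicator_comm (G : SimpleGraph V) (x y : V) :
    adjIndicator G x y = adjIndicator G y x :=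
  decide_eq_decide.2 (G.adj_comm x y)

variable (ι) in
/-- The bipartite graph joining each point `s` of the cube `ι → Bool` to the literals `(i, s i)`. -/
def cubeGraph : SimpleGraph ((ι × Bool) ⊕ (ι → Bool)) where
  Adj
    | .inl l, .inr s => s l.1 = l.2
    | .inr s, .inl l => s l.1 = l.2
    | _, _ => False
  symm := ⟨by rintro (_ | _) (_ | _) <;> exact id⟩
  loopless := ⟨by rintro (_ | _) <;> exact id⟩

/-- A sample giving half of the weight to the cube point `s` and the other half to the literals
`(i, r i)`; `s` is repeated once per literal to get equal weights. -/
def starSample (s r : ι → Bool) : ι ⊕ ι → (ι × Bool) ⊕ (ι → Bool) :=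
  Sum.elim (fun i ↦ .inl (i, r i)) fun _ ↦ .inr s

open Classical in
/-- The difference of the indicator of `T` at the two literals on the coordinate `i`. -/
noncomputable def literalContrast (T : Finset (ι × Bool)) (i : ι) : ℝ :=
  (if (i, true) ∈ T then 1 else 0) - if (i, false) ∈ T then 1 else 0

variable [Fintype ι]

lemma sum_sq_literalContrast_le (T : Finset (ι × Bool)) :
    ∑ i, literalContrast T i ^ 2 ≤ Fintype.card ι := by
  have hle (i : ι) : literalContrast T i ^ 2 ≤ 1 := by
    unfold literalContrast
    split_ifs <;> norm_num
  simpa using sum_le_sum fun i (_ : i ∈ univ) ↦ hle i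

lemma LP1_starSample (e : (ι × Bool) ⊕ (ι → Bool) → V) (s r : ι → Bool) (d : V → Bool) :
    LP1 (empiricalDist (e ∘ starSample s r)) d =
      ((∑ i, if d (e (.inl (i, r i))) then 1 else 0) +
        ∑ _i : ι, if d (e (.inr s)) then 1 else 0) / (2 * Fintype.card ι) := by
  rw [LP1_empiricalDist, Fintype.sum_sum_type, Fintype.card_sum, Nat.cast_add, ← two_mul]
  rfl

lemma LP1_starSample_sub (e : (ι × Bool) ⊕ (ι → Bool) → V) (s : ι → Bool) (d : V → Bool) :
    LP1 (empiricalDist (e ∘ starSample s s)) d -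
        LP1 (empiricalDist (e ∘ starSample s fun i ↦ !s i)) d =
      signedSum s (literalContrast (trace d (e ∘ .inl))) / (2 * Fintype.card ι) := by
  rw [LP1_starSample, LP1_starSample, ← sub_div, add_sub_add_right_eq_sub, ← sum_sub_distrib,
    signedSum]
  congr! 2 with i
  cases s i <;> simp [literalContrast]

lemma LP2_starSample (e : (ι × Bool) ⊕ (ι → Bool) ↪ V) (s r : ι → Bool) :
    LP2 (empiricalDist (e ∘ starSample s r)) (adjIndicator ((cubeGraph ι).map e)) =
      #{i | s i = r i} / (2 * Fintype.card ι) := by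
  rcases isEmpty_or_nonempty ι with _ | _
  · simp [LP2_empiricalDist]
  have hι : (Fintype.card ι : ℝ) ≠ 0 := by simp
  have hedges : ∑ x, ∑ y, (if adjIndicator ((cubeGraph ι).map e) ((e ∘ starSample s r) x)
      ((e ∘ starSample s r) y) then (1 : ℝ) else 0) = 2 * Fintype.card ι * #{i | s i = r i} := by
    simp only [Fintype.sum_sum_type, Function.comp_apply, starSample, Sum.elim_inl, Sum.elim_inr,
      adjIndicator, SimpleGraph.map_adj_apply, cubeGraph, decide_eq_true_eq, if_false,
      sum_const_zero, sum_const, card_univ, nsmul_eq_mul, sum_boole, zero_add, add_zero, ← mul_sum,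
      two_mul, add_mul]
  rw [LP2_empiricalDist, hedges, Fintype.card_sum, Nat.cast_add]
  field_simp
  ring

variable [Nonempty ι] {D : Set (V → Bool)} {ε : ℝ} {ρ : ℕ}

lemma exists_mul_IPM1_starSample_le (e : (ι × Bool) ⊕ (ι → Bool) ↪ V) (hε : 0 < ε) (hρ : 1 ≤ ρ)
    (hD : vcDim D ≤ ρ) :
    ∃ s : ι → Bool,
      ε * IPM1 D (empiricalDist (e ∘ starSample s s))
          (empiricalDist (e ∘ starSample s fun i ↦ !s i)) ≤
        (2 * ρ * log (2 * Fintype.card ι + 1) + ε ^ 2 / 2 * Fintype.card ι) /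
          (2 * Fintype.card ι) := by
  classical
  let f : ι × Bool ↪ V := Function.Embedding.inl.trans e
  obtain ⟨s, hs⟩ := exists_forall_mul_abs_signedSum_le (traces D f) literalContrast
    (fun T _ ↦ sum_sq_literalContrast_le T) ε
  have hlog : log (2 * #(traces D f)) ≤ 2 * ρ * log (2 * Fintype.card ι + 1) := by
    simpa [mul_comm] using log_two_mul_card_traces_le f hρ hD
  refine ⟨s, ?_⟩
  rw [mul_comm, ← le_div_iff₀ hε]
  have hbound : 0 ≤ (2 * ρ * log (2 * Fintype.card ι + 1) + ε ^ 2 / 2 * Fintype.card ι) /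
      (2 * Fintype.card ι) / ε := by
    have : 0 ≤ log (2 * Fintype.card ι + 1) := log_nonneg (by simp)
    positivity
  refine Real.iSup_le (fun d ↦ Real.iSup_le (fun hd ↦ ?_) hbound) hbound
  rw [LP1_starSample_sub, abs_div, abs_of_nonneg (by positivity : 0 ≤ 2 * (Fintype.card ι : ℝ)),
    le_div_iff₀ hε, mul_comm, mul_div_assoc']
  gcongr
  exact (hs _ (mem_traces.2 ⟨d, hd, rfl⟩)).trans (by gcongr)

lemma card_le_of_IPM1_ge (e : (ι × Bool) ⊕ (ι → Bool) ↪ V) (hε : 0 < ε) (hρ : 1 ≤ ρ)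
    (hD : vcDim D ≤ ρ)
    (hIPM : ∀ p₁ p₂ : V → ℝ, IsDist p₁ → IsDist p₂ →
      IPM1 D p₁ p₂ ≥ ε * |LP2 p₁ (adjIndicator ((cubeGraph ι).map e)) -
        LP2 p₂ (adjIndicator ((cubeGraph ι).map e))|) :
    (Fintype.card ι : ℝ) ≤ 4 * (ρ / ε ^ 2) * log (2 * Fintype.card ι + 1) := by
  obtain ⟨s, hs⟩ := exists_mul_IPM1_starSample_le e hε hρ hD
  have hlower : ε * (1 / 2) ≤ IPM1 D (empiricalDist (e ∘ starSample s s))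
      (empiricalDist (e ∘ starSample s fun i ↦ !s i)) := by
    have hsep := hIPM _ _ (isDist_empiricalDist (e ∘ starSample s s))
      (isDist_empiricalDist (e ∘ starSample s fun i ↦ !s i))
    have hhalf : (Fintype.card ι : ℝ) / (2 * Fintype.card ι) = 1 / 2 := by field_simp
    simpa [LP2_starSample, hhalf] using hsep
  have hmain := (mul_le_mul_of_nonneg_left hlower hε.le).trans hs
  rw [le_div_iff₀ (by positivity)] at hmain
  rw [mul_div_assoc', div_mul_eq_mul_div, le_div_iff₀ (by positivity)]
  linarith

end CubeGraph

lemma eventually_le_mul_log_of_le_mul_log {a : ℝ} (ha : 0 < a) :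
    ∀ᶠ y : ℝ in Filter.atTop, ∀ x : ℝ, y ≤ a * x * Real.log y →
      1 ≤ Real.log x ∧ y ≤ 2 * a * x * Real.log x := by
  have hlog : ∀ᶠ y : ℝ in Filter.atTop, ‖Real.log y‖ ≤ a⁻¹ * ‖y ^ (1 / 2 : ℝ)‖ :=
    (isLittleO_log_rpow_atTop one_half_pos).bound (inv_pos.2 ha)
  filter_upwards [hlog, Filter.eventually_ge_atTop (Real.exp 1 ^ 2)] with y hy hexp x hxy
  have hy₀ : 0 < y := (by positivity : (0 : ℝ) < Real.exp 1 ^ 2).trans_le hexp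
  have hsqrt : Real.exp 1 ≤ √y := Real.le_sqrt_of_sq_le hexp
  have hsqrt₀ : 0 < √y := Real.sqrt_pos.2 hy₀
  have hlogy : 0 < Real.log y := Real.log_pos (by nlinarith [Real.add_one_le_exp 1])
  have hx₀ : 0 < x := by
    by_contra! hx
    nlinarith [mul_nonneg ha.le (mul_nonneg (neg_nonneg.2 hx) hlogy.le)]
  have halog : a * Real.log y ≤ √y := by
    rw [← Real.sqrt_eq_rpow, Real.norm_of_nonneg hlogy.le, Real.norm_of_nonneg hsqrt₀.le] at hy
    rwa [← le_inv_mul_iff₀ ha]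
  have hx : √y ≤ x := by
    refine le_of_mul_le_mul_right ?_ hsqrt₀
    calc √y * √y = y := Real.mul_self_sqrt hy₀.le
      _ ≤ x * (a * Real.log y) := by linarith
      _ ≤ x * √y := by gcongr
  have hlogx : Real.log y ≤ 2 * Real.log x := by
    have := Real.log_le_log hsqrt₀ hx
    rw [Real.log_sqrt hy₀.le] at this
    linarith
  refine ⟨(Real.le_log_iff_exp_le hx₀).2 (hsqrt.trans hx), ?_⟩
  calc y ≤ a * x * Real.log y := hxy
    _ ≤ a * x * (2 * Real.log x) := by gcongr
    _ = 2 * a * x * Real.log x := by ring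

lemma nonempty_cube_embedding {k n : ℕ} (hn : 2 ^ (k + 1) ≤ n) :
    Nonempty ((Fin k × Bool) ⊕ (Fin k → Bool) ↪ Fin n) := by
  refine Function.Embedding.nonempty_of_card_le ?_
  have : 2 * k ≤ 2 ^ k := Nat.mul_le_pow (by decide) k
  simp only [Fintype.card_sum, Fintype.card_prod, Fintype.card_fin, Fintype.card_bool,
    Fintype.card_fun]
  lia

lemma exists_two_pow_succ_le_and_logb_le {m n : ℕ} (hn : 2 ^ (m + 2) ≤ n) :
    ∃ k > m, 2 ^ (k + 1) ≤ n ∧ Real.logb 2 n ≤ 2 * k + 1 := by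
  have hn₀ : n ≠ 0 := (Nat.two_pow_pos _).trans_le hn |>.ne'
  have hm : m + 2 ≤ Nat.log 2 n := Nat.le_log_of_pow_le one_lt_two hn
  obtain ⟨k, hk⟩ : ∃ k, Nat.log 2 n = k + 1 := Nat.exists_eq_add_one.2 (by lia)
  refine ⟨k, by lia, hk ▸ Nat.pow_log_le_self 2 hn₀, ?_⟩
  have hfloor : ⌊Real.logb 2 n⌋₊ = k + 1 := by exact_mod_cast hk ▸ Real.natFloor_logb_natCast 2 n
  have hk₁ : (1 : ℝ) ≤ k := by exact_mod_cast (by lia : 1 ≤ k)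
  calc Real.logb 2 n ≤ (⌊Real.logb 2 n⌋₊ : ℝ) + 1 := (Nat.lt_floor_add_one _).le
    _ = k + 2 := by rw [hfloor]; push_cast; ring
    _ ≤ 2 * k + 1 := by linarith

theorem stmt14_general :
    ∃ c : ℝ, 0 < c ∧ ∃ N : ℕ, ∀ n : ℕ, N ≤ n → ∀ (V : Type*), (Fin n ↪ V) →
      ∃ g : V → V → Bool, (∀ x y, g x y = g y x) ∧
        ∀ ε : ℝ, 0 < ε → ∀ D : Set (V → Bool), ∀ ρ : ℕ, 1 ≤ ρ → vcDim D ≤ ρ →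
          (∀ p₁ p₂ : V → ℝ, IsDist p₁ → IsDist p₂ →
            IPM1 D p₁ p₂ ≥ ε * |LP2 p₁ g - LP2 p₂ g|) →
          1 ≤ Real.log (ρ / ε ^ 2) ∧
            Real.logb 2 n ≤ c * (ρ / ε ^ 2) * Real.log (ρ / ε ^ 2) := by
  obtain ⟨Y, hY⟩ := Filter.eventually_atTop.1
    (eventually_le_mul_log_of_le_mul_log (by norm_num : (0 : ℝ) < 12))
  refine ⟨24, by norm_num, 2 ^ (⌈Y⌉₊ + 2), fun n hn V v ↦ ?_⟩
  obtain ⟨k, hYk, hkn, hnk⟩ := exists_two_pow_succ_le_and_logb_le hn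
  obtain ⟨e⟩ := nonempty_cube_embedding hkn
  have : NeZero k := ⟨by lia⟩
  refine ⟨adjIndicator ((cubeGraph (Fin k)).map (e.trans v)), adjIndicator_comm _,
    fun ε hε D ρ hρ hD hIPM ↦ ?_⟩
  have hY_le : Y ≤ 2 * k + 1 := by
    have : (⌈Y⌉₊ : ℝ) ≤ k := by exact_mod_cast hYk.le
    linarith [Nat.le_ceil Y]
  have hk₁ : (1 : ℝ) ≤ k := by exact_mod_cast NeZero.one_le
  have hk : (k : ℝ) ≤ 4 * (ρ / ε ^ 2) * Real.log (2 * k + 1) := by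
    simpa using card_le_of_IPM1_ge (e.trans v) hε hρ hD hIPM
  obtain ⟨hlog, hbound⟩ := hY (2 * k + 1) hY_le (ρ / ε ^ 2) (by linarith)
  exact ⟨hlog, by linarith⟩

/-- expressiveness over finite domains, graph case
(Theorem `main_expressive_finite_1`). -/
theorem stmt14 :
    ∃ c : ℝ, 0 < c ∧ ∃ N : ℕ, ∀ n : ℕ, N ≤ n →
      ∀ (V : Type) [Fintype V], Fintype.card V = n →
        ∃ g : V → V → Bool, (∀ x y, g x y = g y x) ∧
          ∀ ε : ℝ, 0 < ε →
            ∀ D : Set (V → Bool), ∀ ρ : ℕ, 1 ≤ ρ → vcDim D = (ρ : ℕ∞) →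
              (∀ p₁ p₂ : V → ℝ, IsDist p₁ → IsDist p₂ →
                IPM1 D p₁ p₂ ≥ ε * |LP2 p₁ g - LP2 p₂ g|) →
              Real.logb 2 n ≤ c * ((ρ : ℝ) / ε ^ 2) * (Real.log ((ρ : ℝ) / ε ^ 2)) ^ 2 := by
  obtain ⟨c, hc, N, hN⟩ := stmt14_general
  refine ⟨c, hc, N, fun n hn V _ hV ↦ ?_⟩
  obtain ⟨g, hg, hgen⟩ := hN n hn V (Fintype.equivFinOfCardEq hV).symm.toEmbedding
  refine ⟨g, hg, fun ε hε D ρ hρ hD hIPM ↦ ?_⟩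
  obtain ⟨hlog, hbound⟩ := hgen ε hε D ρ hρ hD.le hIPM
  exact hbound.trans (by gcongr; exact le_self_pow₀ hlog two_ne_zero)

end GraphDisc
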